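/- Let p ∈ [1,∞), let ρ : ℝ^N → ℝ be continuous and strictly positive with ∫_{ℝ^N} ρ(x) dx = 1, and let β > 0. Let J ∈ C¹(ℝ^N) be nonnegative, even, supported in the closed unit ball with ∫ J = 1; let g ∈ C¹(ℝ) be globally Lipschitz with |g(s)| ≤ a for all s, g(0) = 0, and g' globally Lipschitz; let h : ℝ → [0,h*) be continuous. Fix ε > 0 and let S(t,τ)u_τ := u(t) denote the solution of u(t) = e^{−(t−τ)}u_τ + ∫_τ^t e^{−(t−s)} g(β(J*u(s)) + β h(s)) ds. Define, for t ∈ ℝ, A(t) := ⋂_{s ≤ t} closure(⋃_{τ ≤ s} S(t,τ)B(0,a+ε)), where B(0,a+ε) is the closed ball of radius a+ε in L^p(ℝ^N,ρ). Then for every t ∈ ℝ: (i) A(t) is a nonempty compact subset of L^p(ℝ^N,ρ) contained in the closed ball of radius a; (ii) A(t) pullback attracts bounded sets at time t, i.e. for every bounded D ⊆ L^p(ℝ^N,ρ), sup_{d ∈ D} dist(S(t,τ)d, A(t)) → 0 as τ → −∞, where dist is the distance from a point to the set A(t). -/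

import Mathlib

open MeasureTheory Set
open scoped ENNReal

noncomputable section

abbrev Euc (N : ℕ) := EuclideanSpace ℝ (Fin N)

/-- Weighted `L^p` norm `(∫ ρ |u|^p)^{1/p}`. -/
def wnorm {N : ℕ} (p : ℝ) (ρ u : Euc N → ℝ) : ℝ :=
  (∫ x, ρ x * |u x| ^ p) ^ (1 / p)

/-- Convolution `(J*u)(x) = ∫ J(x-y) u(y) dy`. -/
def conv {N : ℕ} (J u : Euc N → ℝ) (x : Euc N) : ℝ :=
  ∫ y, J (x - y) * u y

/-- Membership in the weighted Lebesgue space `L^p(ℝ^N, ρ)`. -/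
def MemWLp {N : ℕ} (p : ℝ) (ρ u : Euc N → ℝ) : Prop :=
  AEStronglyMeasurable u volume ∧ Integrable fun x => ρ x * |u x| ^ p

/-- `u` satisfies the variation-of-constants identity on `[τ, ∞)` with initial datum `uτ`. -/
def IsSolution {N : ℕ} (J : Euc N → ℝ) (g : ℝ → ℝ) (h : ℝ → ℝ → ℝ) (β τ : ℝ)
    (uτ : Euc N → ℝ) (u : ℝ → Euc N → ℝ) : Prop :=
  ∀ t ≥ τ, ∀ x, u t x = Real.exp (-(t - τ)) * uτ x +
    ∫ s in τ..t, Real.exp (-(t - s)) * g (β * conv J (u s) x + β * h s (u s x))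

/-- The weighted measure `ρ(x) dx` on `ℝ^N`. -/
def wMeasure {N : ℕ} (ρ : Euc N → ℝ) : Measure (Euc N) :=
  volume.withDensity fun x => ENNReal.ofReal (ρ x)

/-- The image at time `t` under the process of the closed ball of radius `r`
taken at initial time `τ`, i.e. `S(t,τ) B(0,r)`, as a subset of `L^p(ℝ^N,ρ)`. -/
def procSet {N : ℕ} (p : ℝ≥0∞) (ρ J : Euc N → ℝ) (g : ℝ → ℝ) (h : ℝ → ℝ)
    (β r t τ : ℝ) : Set (Lp ℝ p (wMeasure ρ)) :=
  {w | ∃ (u : ℝ → Euc N → ℝ) (uτ : Euc N → ℝ),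
      MemWLp p.toReal ρ uτ ∧ wnorm p.toReal ρ uτ ≤ r ∧
      (∀ t' ≥ τ, MemWLp p.toReal ρ (u t')) ∧
      IsSolution J g (fun s _ => h s) β τ uτ u ∧
      ⇑w =ᵐ[wMeasure ρ] u t}

/-- The pullback omega-limit set `A(t) = ⋂_{s ≤ t} closure (⋃_{τ ≤ s} S(t,τ) B(0,r))`. -/
def attrSet {N : ℕ} (p : ℝ≥0∞) [Fact (1 ≤ p)] (ρ J : Euc N → ℝ) (g : ℝ → ℝ) (h : ℝ → ℝ)
    (β r t : ℝ) : Set (Lp ℝ p (wMeasure ρ)) :=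
  ⋂ s ∈ Iic t, closure (⋃ τ ∈ Iic s, procSet p ρ J g h β r t τ)

open Filter Topology
open scoped NNReal

section aux

variable {N : ℕ}

lemma wM_prob (ρ : Euc N → ℝ) (hρc : Continuous ρ) (hρpos : ∀ x, 0 < ρ x)
    (hρ1 : ∫ x, ρ x = 1) : IsProbabilityMeasure (wMeasure ρ) := by
  constructor
  have hi : Integrable ρ := by
    by_contra hn
    rw [integral_undef hn] at hρ1
    norm_num at hρ1
  rw [wMeasure, withDensity_apply _ MeasurableSet.univ, Measure.restrict_univ,
    ← ofReal_integral_eq_lintegral_ofReal hi (Eventually.of_forall fun x => (hρpos x).le), hρ1]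
  simp

lemma wM_integrable_iff (ρ : Euc N → ℝ) (hρc : Continuous ρ) (hρpos : ∀ x, 0 < ρ x)
    (f : Euc N → ℝ) : Integrable f (wMeasure ρ) ↔ Integrable (fun x => ρ x * f x) := by
  rw [wMeasure, integrable_withDensity_iff_integrable_smul' (by fun_prop)
    (Eventually.of_forall fun x => ENNReal.ofReal_lt_top)]
  simp [ENNReal.toReal_ofReal (hρpos _).le]

lemma wM_integral (ρ : Euc N → ℝ) (hρc : Continuous ρ) (hρpos : ∀ x, 0 < ρ x)
    (f : Euc N → ℝ) : ∫ x, f x ∂(wMeasure ρ) = ∫ x, ρ x * f x := by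
  rw [wMeasure, integral_withDensity_eq_integral_toReal_smul (by fun_prop)
    (Eventually.of_forall fun x => ENNReal.ofReal_lt_top)]
  simp [ENNReal.toReal_ofReal (hρpos _).le]

lemma wM_ac (ρ : Euc N → ℝ) : wMeasure ρ ≪ volume := withDensity_absolutelyContinuous _ _

lemma wM_ac' (ρ : Euc N → ℝ) (hρc : Continuous ρ) (hρpos : ∀ x, 0 < ρ x) :
    volume ≪ wMeasure ρ :=
  withDensity_absolutelyContinuous' (by fun_prop)
    (Eventually.of_forall fun x => by simpa using hρpos x)

lemma memWLp_iff (p : ℝ≥0∞) (hp1 : 1 ≤ p) (hp : p ≠ ⊤) (ρ : Euc N → ℝ) (hρc : Continuous ρ)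
    (hρpos : ∀ x, 0 < ρ x) (u : Euc N → ℝ) :
    MemWLp p.toReal ρ u ↔ MemLp u p (wMeasure ρ) := by
  have hp0 : p ≠ 0 := by rintro rfl; simp at hp1
  have key : Integrable (fun x => ρ x * |u x| ^ p.toReal) ↔
    Integrable (fun x => ‖u x‖ ^ p.toReal) (wMeasure ρ) := by
    rw [wM_integrable_iff ρ hρc hρpos]; rfl
  unfold MemWLp
  rw [key]
  constructor
  · rintro ⟨h1, h2⟩
    exact (integrable_norm_rpow_iff (h1.mono_ac (wM_ac ρ)) hp0 hp).1 h2
  · intro h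
    exact ⟨h.1.mono_ac (wM_ac' ρ hρc hρpos), (integrable_norm_rpow_iff h.1 hp0 hp).2 h⟩

lemma wnorm_eq (p : ℝ≥0∞) (hp1 : 1 ≤ p) (hp : p ≠ ⊤) (ρ : Euc N → ℝ) (hρc : Continuous ρ)
    (hρpos : ∀ x, 0 < ρ x) (u : Euc N → ℝ) (hu : MemLp u p (wMeasure ρ)) :
    wnorm p.toReal ρ u = lpNorm u p (wMeasure ρ) := by
  have hp0 : p ≠ 0 := by rintro rfl; simp at hp1
  rw [lpNorm_eq_integral_norm_rpow_toReal hp0 hp hu.1, wM_integral ρ hρc hρpos, wnorm, one_div]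
  rfl

/-- local integrability bound -/
lemma loc_bound (ρ : Euc N → ℝ) (hρc : Continuous ρ) (hρpos : ∀ x, 0 < ρ x) (R : ℝ) :
    ∃ C : ℝ, 0 ≤ C ∧ ∀ u : Euc N → ℝ, Integrable u (wMeasure ρ) →
      IntegrableOn u (Metric.closedBall 0 R) ∧
      ∫ x in Metric.closedBall 0 R, |u x| ≤ C * ∫ x, |u x| ∂(wMeasure ρ) := by
  have hK : IsCompact (Metric.closedBall (0 : Euc N) R) := isCompact_closedBall _ _
  obtain ⟨C, hC⟩ := hK.exists_bound_of_continuousOn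
    (f := fun x => (ρ x)⁻¹) (hρc.inv₀ fun x => (hρpos x).ne').continuousOn
  refine ⟨max C 0, le_max_right _ _, fun u hu => ?_⟩
  have hu' := (wM_integrable_iff ρ hρc hρpos u).1 hu
  have hle : ∀ x ∈ Metric.closedBall (0 : Euc N) R, ‖u x‖ ≤ max C 0 * ‖ρ x * u x‖ := by
    intro x hx
    have h1 := (hC x hx).trans (le_max_left C 0)
    have h2 : ‖u x‖ = ‖(ρ x)⁻¹‖ * ‖ρ x * u x‖ := by
      rw [← norm_mul, ← mul_assoc, inv_mul_cancel₀ (hρpos x).ne', one_mul]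
    rw [h2]
    gcongr
  have hmeas : AEStronglyMeasurable u volume := hu.1.mono_ac (wM_ac' ρ hρc hρpos)
  have hI : Integrable (fun x => max C 0 * ‖ρ x * u x‖) := hu'.norm.const_mul _
  have hIntg : IntegrableOn u (Metric.closedBall 0 R) := by
    refine Integrable.mono' hI.integrableOn hmeas.restrict ?_
    exact (ae_restrict_iff' measurableSet_closedBall).2 (Eventually.of_forall hle)
  refine ⟨hIntg, ?_⟩
  rw [wM_integral ρ hρc hρpos, ← integral_const_mul]
  calc ∫ x in Metric.closedBall 0 R, |u x|
      ≤ ∫ x in Metric.closedBall 0 R, max C 0 * ‖ρ x * u x‖ :=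
        setIntegral_mono_on hIntg.norm hI.integrableOn measurableSet_closedBall hle
    _ ≤ ∫ x, max C 0 * ‖ρ x * u x‖ :=
        setIntegral_le_integral hI (Eventually.of_forall fun x => by positivity)
    _ = _ := by
        congr 1; ext x; rw [norm_mul, Real.norm_of_nonneg (hρpos x).le]; rfl

lemma conv_integrable (ρ : Euc N → ℝ) (hρc : Continuous ρ) (hρpos : ∀ x, 0 < ρ x)
    (J : Euc N → ℝ) (hJc : Continuous J) (hJsupp : ∀ x : Euc N, 1 < ‖x‖ → J x = 0)
    (u : Euc N → ℝ) (hu : Integrable u (wMeasure ρ)) (x : Euc N) :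
    Integrable (fun y => J (x - y) * u y) := by
  obtain ⟨C, -, hC⟩ := loc_bound ρ hρc hρpos (‖x‖ + 1)
  have h1 := (hC u hu).1
  have h2 : IntegrableOn (fun y => J (x - y) * u y) (Metric.closedBall 0 (‖x‖ + 1)) :=
    IntegrableOn.continuousOn_mul (by fun_prop) h1 (isCompact_closedBall _ _)
  refine (integrableOn_iff_integrable_of_support_subset ?_).1 h2
  intro y hy
  by_contra hn
  apply hy
  simp only [Metric.mem_closedBall, dist_zero_right, not_le] at hn
  simp only
  rw [hJsupp, zero_mul]
  have := norm_sub_norm_le y x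
  rw [norm_sub_rev]; linarith

lemma conv_lip (ρ : Euc N → ℝ) (hρc : Continuous ρ) (hρpos : ∀ x, 0 < ρ x)
    (J : Euc N → ℝ) (hJC1 : ContDiff ℝ 1 J) (hJsupp : ∀ x : Euc N, 1 < ‖x‖ → J x = 0) (R : ℝ) :
    ∃ C : ℝ, 0 ≤ C ∧ ∀ u : Euc N → ℝ, Integrable u (wMeasure ρ) → ∀ x y, ‖x‖ ≤ R → ‖y‖ ≤ R →
      |conv J u x - conv J u y| ≤ C * (∫ x, |u x| ∂(wMeasure ρ)) * ‖x - y‖ := by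
  have hcs : HasCompactSupport J := by
    refine HasCompactSupport.of_support_subset_isCompact (isCompact_closedBall (0 : Euc N) 1) ?_
    intro x hx
    by_contra hn
    apply hx
    apply hJsupp
    simpa using hn
  obtain ⟨L, hL⟩ := hJC1.lipschitzWith_of_hasCompactSupport hcs (by norm_num)
  obtain ⟨C, hC0, hC⟩ := loc_bound ρ hρc hρpos (R + 1)
  refine ⟨L * C, by positivity, fun u hu x y hx hy => ?_⟩
  have ix := conv_integrable ρ hρc hρpos J hJC1.continuous hJsupp u hu x
  have iy := conv_integrable ρ hρc hρpos J hJC1.continuous hJsupp u hu y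
  obtain ⟨hi, hb⟩ := hC u hu
  have hz : ∀ x, ‖x‖ ≤ R → ∀ z ∉ Metric.closedBall (0 : Euc N) (R + 1), J (x - z) = 0 := by
    intro x hx z hz
    apply hJsupp
    simp only [Metric.mem_closedBall, dist_zero_right, not_le] at hz
    have := norm_sub_norm_le z x
    rw [norm_sub_rev]; linarith
  have e : conv J u x - conv J u y =
      ∫ z in Metric.closedBall 0 (R + 1), (J (x - z) * u z - J (y - z) * u z) := by
    unfold conv
    rw [← integral_sub ix iy, setIntegral_eq_integral_of_forall_compl_eq_zero]
    intro z hzz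
    rw [hz x hx z hzz, hz y hy z hzz]; simp
  rw [e]
  have hI : IntegrableOn (fun z => (L * ‖x - y‖) * |u z|) (Metric.closedBall 0 (R + 1)) :=
    hi.norm.const_mul _
  calc |∫ z in Metric.closedBall 0 (R + 1), (J (x - z) * u z - J (y - z) * u z)|
      ≤ ∫ z in Metric.closedBall 0 (R + 1), (L * ‖x - y‖) * |u z| := by
        rw [← Real.norm_eq_abs]
        refine norm_integral_le_of_norm_le hI (Eventually.of_forall fun z => ?_)
        rw [← sub_mul, norm_mul]
        have := hL.dist_le_mul (x - z) (y - z)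
        rw [dist_eq_norm, dist_eq_norm, sub_sub_sub_cancel_right] at this
        exact mul_le_mul_of_nonneg_right this (norm_nonneg _)
    _ = (L * ‖x - y‖) * ∫ z in Metric.closedBall 0 (R + 1), |u z| := integral_const_mul _ _
    _ ≤ (L * ‖x - y‖) * (C * ∫ x, |u x| ∂(wMeasure ρ)) := by gcongr
    _ = _ := by ring

lemma exp_int (a τ s : ℝ) :
    ∫ r in τ..s, Real.exp (-(s - r)) * a = a - Real.exp (-(s - τ)) * a := by
  rw [intervalIntegral.integral_eq_sub_of_hasDerivAt (f := fun r => Real.exp (-(s - r)) * a)]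
  · simp
  · intro r _
    have h1 : HasDerivAt (fun r : ℝ => -(s - r)) 1 r := by
      have h0 := ((hasDerivAt_id r).const_sub s).fun_neg
      simpa only [neg_neg, id] using h0
    simpa using h1.exp.mul_const a
  · exact Continuous.intervalIntegrable (by fun_prop) _ _

lemma duh_bound (g : ℝ → ℝ) (a : ℝ) (hga : ∀ s, |g s| ≤ a) (c : ℝ → ℝ) (τ s : ℝ) (hs : τ ≤ s) :
    |∫ r in τ..s, Real.exp (-(s - r)) * g (c r)| ≤ a := by
  have ha : 0 ≤ a := (abs_nonneg _).trans (hga 0)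
  have h1 : ‖∫ r in τ..s, Real.exp (-(s - r)) * g (c r)‖ ≤
      ∫ r in τ..s, Real.exp (-(s - r)) * a := by
    refine intervalIntegral.norm_integral_le_of_norm_le hs (Eventually.of_forall fun r _ => ?_)
      (Continuous.intervalIntegrable (by fun_prop) _ _)
    rw [norm_mul, Real.norm_of_nonneg (Real.exp_pos _).le]
    exact mul_le_mul_of_nonneg_left (hga _) (Real.exp_pos _).le
  rw [exp_int, Real.norm_eq_abs] at h1
  have := mul_nonneg (Real.exp_pos (-(s - τ))).le ha
  linarith

lemma left_meas (c : ℝ → ℝ) (τ : ℝ)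
    (hc : ∀ s > τ, Tendsto c (𝓝[<] s) (𝓝 (c s))) :
    AEMeasurable c (volume.restrict (Ioi τ)) := by
  let k : ℕ → ℝ → ℝ := fun n s => ((⌈((n : ℝ) + 1) * s⌉ - 1 : ℤ) : ℝ) / ((n : ℝ) + 1)
  refine aemeasurable_of_tendsto_metrizable_ae' (f := fun (n : ℕ) s => c (k n s)) ?_ ?_
  · intro n
    have : Measurable (fun m : ℤ => c (((m - 1 : ℤ) : ℝ) / ((n : ℝ) + 1))) := measurable_from_top
    have h2 : Measurable (fun s : ℝ => ⌈((n : ℝ) + 1) * s⌉) :=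
      Int.measurable_ceil.comp (measurable_const_mul _)
    exact (this.comp h2).aemeasurable
  · refine (ae_restrict_iff' measurableSet_Ioi).2 (Eventually.of_forall fun s hs => ?_)
    refine (hc s hs).comp ?_
    refine tendsto_nhdsWithin_iff.2 ⟨?_, ?_⟩
    · have hlow : ∀ n : ℕ, s - 1 / ((n : ℝ) + 1) ≤ k n s := by
        intro n
        have hn : (0 : ℝ) < (n : ℝ) + 1 := by positivity
        simp only [k]
        rw [le_div_iff₀ hn, sub_mul, div_mul_cancel₀ _ hn.ne']
        have := Int.le_ceil (((n : ℝ) + 1) * s)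
        push_cast
        linarith
      have hup : ∀ n : ℕ, k n s ≤ s := by
        intro n
        have hn : (0 : ℝ) < (n : ℝ) + 1 := by positivity
        simp only [k]
        rw [div_le_iff₀ hn]
        have := Int.ceil_lt_add_one (((n : ℝ) + 1) * s)
        push_cast
        linarith
      have hl : Tendsto (fun n : ℕ => s - 1 / ((n : ℝ) + 1)) atTop (𝓝 s) := by
        simpa using tendsto_const_nhds.sub (tendsto_one_div_add_atTop_nhds_zero_nat (𝕜 := ℝ))
      exact tendsto_of_tendsto_of_tendsto_of_le_of_le hl tendsto_const_nhds hlow hup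
    · refine Eventually.of_forall fun n => ?_
      have hn : (0 : ℝ) < (n : ℝ) + 1 := by positivity
      simp only [k, mem_Iio]
      rw [div_lt_iff₀ hn]
      have := Int.ceil_lt_add_one (((n : ℝ) + 1) * s)
      push_cast
      linarith

/-- Left continuity of a (possibly junk) primitive of a locally bounded function. -/
lemma prim_left (G : ℝ → ℝ) (τ s C : ℝ) (hs : τ < s) (hG : ∀ r ≤ s, |G r| ≤ C) :
    Tendsto (fun r => ∫ q in τ..r, G q) (𝓝[<] s) (𝓝 (∫ q in τ..s, G q)) := by
  by_cases hi : IntervalIntegrable G volume τ s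
  · have hc := intervalIntegral.continuousOn_primitive_interval' hi left_mem_uIcc
    have h1 := hc s right_mem_uIcc
    rw [uIcc_of_le hs.le] at h1
    have : 𝓝[<] s ≤ 𝓝[Icc τ s] s := by
      rw [← nhdsWithin_Ioo_eq_nhdsLT hs]
      exact nhdsWithin_mono _ Ioo_subset_Icc_self
    exact h1.tendsto.mono_left this
  · have hn : ∀ᶠ r in 𝓝[<] s, ¬ IntervalIntegrable G volume τ r := by
      by_contra hcon
      apply hi
      simp only [not_eventually, not_not] at hcon
      have hall : ∀ r, τ < r → r < s → IntervalIntegrable G volume τ r := by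
        intro r hr hrs
        have hev : ∀ᶠ q in 𝓝[<] s, r < q :=
          eventually_nhdsWithin_of_eventually_nhds (lt_mem_nhds hrs)
        obtain ⟨q, hq1, hq2⟩ := (hcon.and_eventually hev).exists
        refine hq1.mono_set ?_
        rw [uIcc_of_le hr.le, uIcc_of_le (hr.trans hq2).le]
        exact Icc_subset_Icc_right hq2.le
      rw [intervalIntegrable_iff_integrableOn_Ioo_of_le hs.le]
      obtain ⟨v, -, hv2, hv3⟩ := exists_seq_strictMono_tendsto' hs
      have hU : Ioo τ s = ⋃ n, Ioc τ (v n) := by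
        ext q
        simp only [mem_Ioo, mem_iUnion, mem_Ioc]
        constructor
        · rintro ⟨h1, h2⟩
          obtain ⟨n, hn⟩ := (hv3.eventually (lt_mem_nhds h2)).exists
          exact ⟨n, h1, hn.le⟩
        · rintro ⟨n, h1, h2⟩
          exact ⟨h1, h2.trans_lt (hv2 n).2⟩
      have hm : AEStronglyMeasurable G (volume.restrict (Ioo τ s)) := by
        rw [hU, aestronglyMeasurable_iUnion_iff]
        intro n
        exact (hall (v n) (hv2 n).1 (hv2 n).2).1.1
      refine Integrable.mono' (integrableOn_const (C := C) (by simp)) hm ?_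
      exact (ae_restrict_iff' measurableSet_Ioo).2 (Eventually.of_forall fun q hq => hG q hq.2.le)
    rw [intervalIntegral.integral_undef hi]
    refine tendsto_const_nhds.congr' ?_
    filter_upwards [hn] with r hr
    rw [intervalIntegral.integral_undef hr]

lemma exp_factor (f : ℝ → ℝ) (τ s : ℝ) :
    ∫ r in τ..s, Real.exp (-(s - r)) * f r = Real.exp (-s) * ∫ r in τ..s, Real.exp r * f r := by
  rw [← intervalIntegral.integral_const_mul]
  congr 1; ext r
  rw [← mul_assoc, ← Real.exp_add]; congr 2; ring

lemma sol_bound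
    (β : ℝ) (J : Euc N → ℝ) (g : ℝ → ℝ) (a : ℝ)
    (h : ℝ → ℝ) (τ : ℝ) (uτ : Euc N → ℝ) (u : ℝ → Euc N → ℝ)
    (hga : ∀ s, |g s| ≤ a) (hsol : IsSolution J g (fun s _ => h s) β τ uτ u) (s : ℝ)
    (hs : τ ≤ s) (x : Euc N) :
    |u s x - Real.exp (-(s - τ)) * uτ x| ≤ a := by
  rw [hsol s hs x, add_sub_cancel_left]
  exact duh_bound g a hga (fun r => β * conv J (u r) x + β * h r) τ s hs

lemma sol_bound'
    (β : ℝ) (J : Euc N → ℝ) (g : ℝ → ℝ) (a : ℝ)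
    (h : ℝ → ℝ) (τ : ℝ) (uτ : Euc N → ℝ) (u : ℝ → Euc N → ℝ)
    (hga : ∀ s, |g s| ≤ a) (hsol : IsSolution J g (fun s _ => h s) β τ uτ u) (s : ℝ)
    (hs : τ ≤ s) (x : Euc N) : |u s x| ≤ |uτ x| + a := by
  have h1 := sol_bound β J g a h τ uτ u hga hsol s hs x
  have h2 : |Real.exp (-(s - τ)) * uτ x| ≤ |uτ x| := by
    rw [abs_mul, abs_of_pos (Real.exp_pos _)]
    have : Real.exp (-(s - τ)) ≤ 1 := Real.exp_le_one_iff.2 (by linarith)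
    exact mul_le_of_le_one_left (abs_nonneg _) this
  have h3 := abs_add_le (u s x - Real.exp (-(s - τ)) * uτ x) (Real.exp (-(s - τ)) * uτ x)
  rw [sub_add_cancel] at h3
  linarith

lemma sol_left
    (β : ℝ) (J : Euc N → ℝ) (g : ℝ → ℝ) (a : ℝ)
    (hga : ∀ s, |g s| ≤ a) (h : ℝ → ℝ) (τ : ℝ) (uτ : Euc N → ℝ)
    (u : ℝ → Euc N → ℝ)
    (hsol : IsSolution J g (fun s _ => h s) β τ uτ u) (s : ℝ)
    (hs : τ < s) (x : Euc N) :
    Tendsto (fun r => u r x) (𝓝[<] s) (𝓝 (u s x)) := by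
  have ha : 0 ≤ a := (abs_nonneg _).trans (hga 0)
  have hp := prim_left (fun r => Real.exp r * g (β * conv J (u r) x + β * h r)) τ s
    (Real.exp s * a) hs (by
      intro r hr
      rw [abs_mul, abs_of_pos (Real.exp_pos _)]
      exact mul_le_mul (Real.exp_le_exp.2 hr) (hga _) (abs_nonneg _) (Real.exp_pos _).le)
  have he : Tendsto (fun r : ℝ => Real.exp (-r)) (𝓝[<] s) (𝓝 (Real.exp (-s))) :=
    ((by fun_prop : Continuous fun r : ℝ => Real.exp (-r)).tendsto s).mono_left nhdsWithin_le_nhds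
  have he2 : Tendsto (fun r : ℝ => Real.exp (-(r - τ)) * uτ x) (𝓝[<] s)
      (𝓝 (Real.exp (-(s - τ)) * uτ x)) :=
    ((by fun_prop : Continuous fun r : ℝ => Real.exp (-(r - τ)) * uτ x).tendsto s).mono_left
      nhdsWithin_le_nhds
  rw [hsol s hs.le x, exp_factor]
  refine (he2.add (he.mul hp)).congr' ?_
  have hev : ∀ᶠ r in 𝓝[<] s, τ < r :=
    eventually_nhdsWithin_of_eventually_nhds (lt_mem_nhds hs)
  filter_upwards [hev] with r hr
  rw [hsol r hr.le x, exp_factor]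

lemma conv_left
    (ρ : Euc N → ℝ) (hρc : Continuous ρ) (hρpos : ∀ x, 0 < ρ x) (hρ1 : ∫ x, ρ x = 1)
    (β : ℝ) (J : Euc N → ℝ) (hJC1 : ContDiff ℝ 1 J) (hJsupp : ∀ x : Euc N, 1 < ‖x‖ → J x = 0)
    (g : ℝ → ℝ) (a : ℝ) (hga : ∀ s, |g s| ≤ a) (h : ℝ → ℝ)
    (τ : ℝ) (uτ : Euc N → ℝ) (u : ℝ → Euc N → ℝ)
    (hsol : IsSolution J g (fun s _ => h s) β τ uτ u)
    (huτ : Integrable uτ (wMeasure ρ)) (hu : ∀ s ≥ τ, Integrable (u s) (wMeasure ρ))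
    (s : ℝ) (hs : τ < s) (x : Euc N) :
    Tendsto (fun r => conv J (u r) x) (𝓝[<] s) (𝓝 (conv J (u s) x)) := by
  have := wM_prob ρ hρc hρpos hρ1
  have hev : ∀ᶠ r in 𝓝[<] s, τ < r :=
    eventually_nhdsWithin_of_eventually_nhds (lt_mem_nhds hs)
  have hb : Integrable (fun y => |uτ y| + a) (wMeasure ρ) := huτ.abs.add (integrable_const a)
  have hbi := conv_integrable ρ hρc hρpos J hJC1.continuous hJsupp _ hb x
  refine tendsto_integral_filter_of_dominated_convergence
    (fun y => ‖J (x - y) * (|uτ y| + a)‖) ?_ ?_ hbi.norm ?_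
  · filter_upwards [hev] with r hr
    exact (conv_integrable ρ hρc hρpos J hJC1.continuous hJsupp _ (hu r hr.le) x).1
  · filter_upwards [hev] with r hr
    refine Eventually.of_forall fun y => ?_
    rw [norm_mul, norm_mul]
    refine mul_le_mul_of_nonneg_left ?_ (norm_nonneg _)
    exact (sol_bound' β J g a h τ uτ u hga hsol r hr.le y).trans (le_abs_self _)
  · refine Eventually.of_forall fun y => ?_
    exact (sol_left β J g a hga h τ uτ u hsol s hs y).const_mul _

lemma rhs_integrable
    (ρ : Euc N → ℝ) (hρc : Continuous ρ) (hρpos : ∀ x, 0 < ρ x) (hρ1 : ∫ x, ρ x = 1)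
    (β : ℝ) (J : Euc N → ℝ) (hJC1 : ContDiff ℝ 1 J) (hJsupp : ∀ x : Euc N, 1 < ‖x‖ → J x = 0)
    (g : ℝ → ℝ) (hgc : Continuous g) (a : ℝ) (hga : ∀ s, |g s| ≤ a)
    (h : ℝ → ℝ) (hhc : Continuous h) (τ : ℝ) (uτ : Euc N → ℝ)
    (u : ℝ → Euc N → ℝ)
    (hsol : IsSolution J g (fun s _ => h s) β τ uτ u)
    (huτ : Integrable uτ (wMeasure ρ)) (hu : ∀ s ≥ τ, Integrable (u s) (wMeasure ρ))
    (t s₁ s₂ : ℝ) (hs₁ : τ ≤ s₁) (hs₂ : τ ≤ s₂) (x : Euc N) :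
    IntervalIntegrable (fun s => Real.exp (-(t - s)) * g (β * conv J (u s) x + β * h s))
      volume s₁ s₂ := by
  have hm := left_meas (fun r => conv J (u r) x) τ (fun s hs =>
    conv_left ρ hρc hρpos hρ1 β J hJC1 hJsupp g a hga h τ uτ u hsol huτ hu s hs x)
  have hm2 : AEMeasurable (fun s => g (β * conv J (u s) x + β * h s))
      (volume.restrict (Ioi τ)) := by
    refine hgc.measurable.comp_aemeasurable ?_
    exact (hm.const_mul β).add (by fun_prop)
  rw [intervalIntegrable_iff]
  have hsub : uIoc s₁ s₂ ⊆ Ioi τ := by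
    intro r hr
    rw [mem_uIoc] at hr
    rcases hr with hr | hr
    · exact hs₁.trans_lt hr.1
    · exact hs₂.trans_lt hr.1
  have hm3 : AEStronglyMeasurable (fun s => g (β * conv J (u s) x + β * h s))
      (volume.restrict (uIoc s₁ s₂)) :=
    (hm2.mono_measure (Measure.restrict_mono hsub le_rfl)).aestronglyMeasurable
  have hi : IntegrableOn (fun s => Real.exp (-(t - s)) * a) (uIoc s₁ s₂) :=
    intervalIntegrable_iff.1 (Continuous.intervalIntegrable (by fun_prop) _ _)
  refine Integrable.mono' hi ?_ (Eventually.of_forall fun r => ?_)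
  · exact ((by fun_prop : Continuous fun s : ℝ => Real.exp (-(t - s))).aestronglyMeasurable).mul hm3
  · rw [norm_mul, Real.norm_of_nonneg (Real.exp_pos _).le]
    exact mul_le_mul_of_nonneg_left (hga _) (Real.exp_pos _).le

lemma sol_restart
    (ρ : Euc N → ℝ) (hρc : Continuous ρ) (hρpos : ∀ x, 0 < ρ x) (hρ1 : ∫ x, ρ x = 1)
    (β : ℝ) (J : Euc N → ℝ) (hJC1 : ContDiff ℝ 1 J) (hJsupp : ∀ x : Euc N, 1 < ‖x‖ → J x = 0)
    (g : ℝ → ℝ) (hgc : Continuous g) (a : ℝ) (hga : ∀ s, |g s| ≤ a)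
    (h : ℝ → ℝ) (hhc : Continuous h) (τ : ℝ) (uτ : Euc N → ℝ)
    (u : ℝ → Euc N → ℝ)
    (hsol : IsSolution J g (fun s _ => h s) β τ uτ u)
    (huτ : Integrable uτ (wMeasure ρ)) (hu : ∀ s ≥ τ, Integrable (u s) (wMeasure ρ))
    (s : ℝ) (hs : τ ≤ s) : IsSolution J g (fun s _ => h s) β s (u s) u := by
  intro t ht x
  have hst : s ≤ t := ht
  have i1 := rhs_integrable ρ hρc hρpos hρ1 β J hJC1 hJsupp g hgc a hga h hhc τ uτ u hsol huτ hu
    t τ s le_rfl hs x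
  have i2 := rhs_integrable ρ hρc hρpos hρ1 β J hJC1 hJsupp g hgc a hga h hhc τ uτ u hsol huτ hu
    t s t hs (hs.trans hst) x
  rw [hsol t (hs.trans hst) x, hsol s hs x, ← intervalIntegral.integral_add_adjacent_intervals i1 i2,
    mul_add, ← mul_assoc, ← Real.exp_add, ← intervalIntegral.integral_const_mul, ← add_assoc]
  congr 1
  congr 1
  · congr 2; ring
  · congr 1; ext r
    rw [← mul_assoc, ← Real.exp_add]; congr 2; ring

end aux

section aux2

variable {N : ℕ}

lemma int_abs_le_lpNorm (p : ℝ≥0∞) (hp1 : 1 ≤ p) (μ : Measure (Euc N)) [IsProbabilityMeasure μ]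
    (u : Euc N → ℝ) (hu : MemLp u p μ) : ∫ x, |u x| ∂μ ≤ lpNorm u p μ := by
  have h1 : ∫ x, |u x| ∂μ = lpNorm u 1 μ := (lpNorm_one_eq_integral_norm hu.1).symm
  rw [h1, ← toReal_eLpNorm hu.1, ← toReal_eLpNorm hu.1]
  exact ENNReal.toReal_mono hu.2.ne (eLpNorm_le_eLpNorm_of_exponent_le hp1 hu.1)

lemma eLpNorm_bdd (p : ℝ≥0∞) (μ : Measure (Euc N)) [IsProbabilityMeasure μ]
    (v : Euc N → ℝ) (a : ℝ) (hv : ∀ x, |v x| ≤ a) : eLpNorm v p μ ≤ ENNReal.ofReal a := by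
  have := eLpNorm_le_of_ae_bound (p := p) (μ := μ) (f := v) (C := a) (Eventually.of_forall hv)
  simpa using this

lemma sol_norm (p : ℝ≥0∞) (hp1 : 1 ≤ p) (μ : Measure (Euc N)) [IsProbabilityMeasure μ]
    (v w : Euc N → ℝ) (a c : ℝ) (hc : 0 ≤ c) (ha : 0 ≤ a) (hv : MemLp v p μ) (hw : MemLp w p μ)
    (hb : ∀ x, |v x - c * w x| ≤ a) : lpNorm v p μ ≤ c * lpNorm w p μ + a := by
  have e : v = (fun x => v x - c * w x) + c • w := by ext x; simp
  have h1 : MemLp (fun x => v x - c * w x) p μ := hv.sub (hw.const_mul c)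
  have h2 : lpNorm v p μ ≤ lpNorm (fun x => v x - c * w x) p μ + lpNorm (c • w) p μ := by
    conv_lhs => rw [e]
    exact lpNorm_add_le h1 hp1
  have h3 : lpNorm (fun x => v x - c * w x) p μ ≤ a := by
    rw [← toReal_eLpNorm h1.1]
    exact ENNReal.toReal_le_of_le_ofReal ha (eLpNorm_bdd p μ _ a hb)
  have h4 : lpNorm (c • w) p μ = c * lpNorm w p μ := by
    rw [lpNorm_const_smul]; simp [abs_of_nonneg hc]
  linarith

lemma sol_lip (ρ : Euc N → ℝ) (hρc : Continuous ρ) (hρpos : ∀ x, 0 < ρ x) (hρ1 : ∫ x, ρ x = 1)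
    (β : ℝ) (J : Euc N → ℝ) (hJC1 : ContDiff ℝ 1 J) (hJsupp : ∀ x : Euc N, 1 < ‖x‖ → J x = 0)
    (g : ℝ → ℝ) (hgc : Continuous g) (ℓg : ℝ)
    (hgLip : ∀ s₁ s₂, |g s₁ - g s₂| ≤ ℓg * |s₁ - s₂|)
    (a : ℝ) (hga : ∀ s, |g s| ≤ a) (h : ℝ → ℝ) (hhc : Continuous h) (M R : ℝ) :
    ∃ K : ℝ, ∀ (τ t : ℝ) (uτ : Euc N → ℝ) (u : ℝ → Euc N → ℝ), τ ≤ t →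
      IsSolution J g (fun s _ => h s) β τ uτ u → Integrable uτ (wMeasure ρ) →
      (∀ s ≥ τ, Integrable (u s) (wMeasure ρ)) → (∫ x, |uτ x| ∂(wMeasure ρ) ≤ M) →
      ∀ x y, ‖x‖ ≤ R → ‖y‖ ≤ R →
      |(u t x - Real.exp (-(t - τ)) * uτ x) - (u t y - Real.exp (-(t - τ)) * uτ y)|
        ≤ K * ‖x - y‖ := by
  have := wM_prob ρ hρc hρpos hρ1
  obtain ⟨C, hC0, hC⟩ := conv_lip ρ hρc hρpos J hJC1 hJsupp R
  have ha : 0 ≤ a := (abs_nonneg _).trans (hga 0)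
  refine ⟨|ℓg| * (|β| * (C * (M + a))), ?_⟩
  intro τ t uτ u ht hsol huτ hu hM x y hx hy
  have ix := rhs_integrable ρ hρc hρpos hρ1 β J hJC1 hJsupp g hgc a hga h hhc τ uτ u hsol huτ hu
    t τ t le_rfl ht x
  have iy := rhs_integrable ρ hρc hρpos hρ1 β J hJC1 hJsupp g hgc a hga h hhc τ uτ u hsol huτ hu
    t τ t le_rfl ht y
  rw [hsol t ht x, hsol t ht y, add_sub_cancel_left, add_sub_cancel_left,
    ← intervalIntegral.integral_sub ix iy]
  set K := |ℓg| * (|β| * (C * (M + a))) * ‖x - y‖ with hK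
  have hM0 : 0 ≤ M := (integral_nonneg fun x => abs_nonneg _).trans hM
  have hK0 : 0 ≤ K := by positivity
  have hbd : ∀ s ≥ τ, |g (β * conv J (u s) x + β * h s) - g (β * conv J (u s) y + β * h s)| ≤ K := by
    intro s hs
    have h1 := hC (u s) (hu s hs) x y hx hy
    have h2 : ∫ x, |u s x| ∂(wMeasure ρ) ≤ M + a := by
      calc ∫ x, |u s x| ∂(wMeasure ρ) ≤ ∫ x, (|uτ x| + a) ∂(wMeasure ρ) :=
            integral_mono (hu s hs).abs (huτ.abs.add (integrable_const a))
              (fun x => sol_bound' β J g a h τ uτ u hga hsol s hs x)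
        _ = ∫ x, |uτ x| ∂(wMeasure ρ) + a := by
            rw [integral_add huτ.abs (integrable_const a)]; simp
        _ ≤ M + a := by linarith
    refine (hgLip _ _).trans ?_
    have e : β * conv J (u s) x + β * h s - (β * conv J (u s) y + β * h s) =
        β * (conv J (u s) x - conv J (u s) y) := by ring
    rw [e, abs_mul]
    calc ℓg * (|β| * |conv J (u s) x - conv J (u s) y|)
        ≤ |ℓg| * (|β| * |conv J (u s) x - conv J (u s) y|) := by
          gcongr; exact le_abs_self _
      _ ≤ |ℓg| * (|β| * (C * (M + a) * ‖x - y‖)) := by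
          have : C * (∫ x, |u s x| ∂(wMeasure ρ)) * ‖x - y‖ ≤ C * (M + a) * ‖x - y‖ := by gcongr
          have := h1.trans this
          gcongr
      _ = K := by rw [hK]; ring
  have h1 : ‖∫ s in τ..t, (Real.exp (-(t - s)) * g (β * conv J (u s) x + β * h s) -
      Real.exp (-(t - s)) * g (β * conv J (u s) y + β * h s))‖ ≤
      ∫ s in τ..t, Real.exp (-(t - s)) * K := by
    refine intervalIntegral.norm_integral_le_of_norm_le ht (Eventually.of_forall fun r hr => ?_)
      (Continuous.intervalIntegrable (by fun_prop) _ _)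
    rw [← mul_sub, norm_mul, Real.norm_of_nonneg (Real.exp_pos _).le]
    exact mul_le_mul_of_nonneg_left (hbd r hr.1.le) (Real.exp_pos _).le
  rw [exp_int, Real.norm_eq_abs] at h1
  have := mul_nonneg (Real.exp_pos (-(t - τ))).le hK0
  linarith

lemma extract (f : ℕ → Euc N → ℝ) (a : ℝ) (hb : ∀ n x, |f n x| ≤ a)
    (hl : ∀ R : ℝ, ∃ K : ℝ, ∀ n x y, ‖x‖ ≤ R → ‖y‖ ≤ R → |f n x - f n y| ≤ K * ‖x - y‖) :
    ∃ (φ : ℕ → ℕ) (F : Euc N → ℝ), StrictMono φ ∧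
      ∀ x, Tendsto (fun n => f (φ n) x) atTop (𝓝 (F x)) := by
  let q : ℕ → Euc N := TopologicalSpace.denseSeq (Euc N)
  have hq : DenseRange q := TopologicalSpace.denseRange_denseSeq _
  have hcomp : IsCompact (Set.pi univ (fun _ : ℕ => Icc (-a) a)) :=
    isCompact_univ_pi fun _ => isCompact_Icc
  obtain ⟨G, -, φ, hφ, hG⟩ := hcomp.tendsto_subseq (x := fun n i => f n (q i))
    (fun n i _ => abs_le.1 (hb n (q i)))
  have hG' : ∀ i, Tendsto (fun n => f (φ n) (q i)) atTop (𝓝 (G i)) :=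
    fun i => (tendsto_pi_nhds.1 hG) i
  have hex : ∀ x, ∃ L, Tendsto (fun n => f (φ n) x) atTop (𝓝 L) := by
    intro x
    apply cauchySeq_tendsto_of_complete
    rw [Metric.cauchySeq_iff']
    intro δ hδ
    obtain ⟨K, hK⟩ := hl (‖x‖ + 1)
    set η := min 1 (δ / (4 * (|K| + 1))) with hη
    have hη0 : 0 < η := by positivity
    obtain ⟨i, hi⟩ := hq.exists_dist_lt x hη0
    rw [dist_eq_norm] at hi
    have hi1 : ‖q i‖ ≤ ‖x‖ + 1 := by
      have := norm_sub_norm_le (q i) x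
      rw [norm_sub_rev] at this
      have := hi.trans_le (min_le_left _ _)
      linarith
    have hclose : ∀ n, |f n x - f n (q i)| ≤ δ / 4 := by
      intro n
      refine (hK n x (q i) (by linarith) hi1).trans ?_
      have h2 := hi.le.trans (min_le_right _ _)
      calc K * ‖x - q i‖ ≤ (|K| + 1) * (δ / (4 * (|K| + 1))) := by
            have := le_abs_self K
            gcongr
            linarith
        _ = δ / 4 := by field_simp
    have hc := (hG' i).cauchySeq
    rw [Metric.cauchySeq_iff'] at hc
    obtain ⟨n0, hn0⟩ := hc (δ / 4) (by positivity)
    refine ⟨n0, fun n hn => ?_⟩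
    have h1 := hn0 n hn
    rw [Real.dist_eq] at h1 ⊢
    have h2 := hclose (φ n)
    have h3 := hclose (φ n0)
    rw [abs_lt] at *
    rw [abs_le] at *
    constructor <;> linarith [h1.1, h1.2, h2.1, h2.2, h3.1, h3.2]
  choose F hF using hex
  exact ⟨φ, F, hφ, hF⟩

lemma bdd_conv (p : ℝ≥0∞) (hp1 : 1 ≤ p) (hp : p ≠ ⊤) (μ : Measure (Euc N))
    [IsProbabilityMeasure μ] (v : ℕ → Euc N → ℝ) (F : Euc N → ℝ) (a : ℝ)
    (hv : ∀ n, AEStronglyMeasurable (v n) μ) (hb : ∀ n x, |v n x| ≤ a)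
    (hF : ∀ x, Tendsto (fun n => v n x) atTop (𝓝 (F x))) :
    MemLp F p μ ∧ Tendsto (fun n => eLpNorm (v n - F) p μ) atTop (𝓝 0) := by
  have hFm : AEStronglyMeasurable F μ :=
    aestronglyMeasurable_of_tendsto_ae atTop hv (Eventually.of_forall hF)
  have hFb : ∀ x, |F x| ≤ a := fun x =>
    le_of_tendsto (hF x).abs (Eventually.of_forall fun n => hb n x)
  have hFL : MemLp F p μ := MemLp.of_bound hFm a (Eventually.of_forall hFb)
  refine ⟨hFL, ?_⟩
  refine tendsto_Lp_finite_of_tendsto_ae hp1 hp hv hFL ?_ (Eventually.of_forall hF)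
  refine unifIntegrable_of hp1 hp hv fun ε hε => ?_
  refine ⟨(|a| + 1).toNNReal, fun i => ?_⟩
  have : {x | (|a| + 1).toNNReal ≤ ‖v i x‖₊} = ∅ := by
    ext x
    simp only [mem_ofPred_eq, mem_empty_iff_false, iff_false, not_le]
    rw [← NNReal.coe_lt_coe]
    rw [Real.coe_toNNReal _ (by positivity), coe_nnnorm, Real.norm_eq_abs]
    have := hb i x
    have := le_abs_self a
    linarith
  rw [this]
  simp

lemma asym_compact (p : ℝ≥0∞) [Fact (1 ≤ p)] (hp : p ≠ ⊤)
    (ρ : Euc N → ℝ) (hρc : Continuous ρ) (hρpos : ∀ x, 0 < ρ x) (hρ1 : ∫ x, ρ x = 1)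
    (β : ℝ) (J : Euc N → ℝ) (hJC1 : ContDiff ℝ 1 J) (hJsupp : ∀ x : Euc N, 1 < ‖x‖ → J x = 0)
    (g : ℝ → ℝ) (hgc : Continuous g) (ℓg : ℝ)
    (hgLip : ∀ s₁ s₂, |g s₁ - g s₂| ≤ ℓg * |s₁ - s₂|)
    (a : ℝ) (hga : ∀ s, |g s| ≤ a) (h : ℝ → ℝ) (hhc : Continuous h) (M t : ℝ)
    (τ : ℕ → ℝ) (hτ : Tendsto τ atTop atBot) (hτt : ∀ n, τ n ≤ t)
    (u0 : ℕ → Euc N → ℝ) (u : ℕ → ℝ → Euc N → ℝ)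
    (hsol : ∀ n, IsSolution J g (fun s _ => h s) β (τ n) (u0 n) (u n))
    (hu0 : ∀ n, MemLp (u0 n) p (wMeasure ρ)) (hM : ∀ n, lpNorm (u0 n) p (wMeasure ρ) ≤ M)
    (hu : ∀ n, ∀ s ≥ τ n, MemLp (u n s) p (wMeasure ρ))
    (w : ℕ → Lp ℝ p (wMeasure ρ)) (hw : ∀ n, ⇑(w n) =ᵐ[wMeasure ρ] u n t) :
    ∃ (φ : ℕ → ℕ) (W : Lp ℝ p (wMeasure ρ)), StrictMono φ ∧
      Tendsto (fun n => w (φ n)) atTop (𝓝 W) := by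
  have := wM_prob ρ hρc hρpos hρ1
  have hp1 : 1 ≤ p := Fact.out
  let v : ℕ → Euc N → ℝ := fun n x => u n t x - Real.exp (-(t - τ n)) * u0 n x
  have hvb : ∀ n x, |v n x| ≤ a := fun n x =>
    sol_bound β J g a h (τ n) (u0 n) (u n) hga (hsol n) t (hτt n) x
  have hvL : ∀ n, MemLp (v n) p (wMeasure ρ) := fun n => (hu n t (hτt n)).sub ((hu0 n).const_mul _)
  obtain ⟨φ, F, hφ, hF⟩ := extract v a hvb (by
    intro R
    obtain ⟨K, hK⟩ := sol_lip ρ hρc hρpos hρ1 β J hJC1 hJsupp g hgc ℓg hgLip a hga h hhc M R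
    refine ⟨K, fun n x y hx hy => ?_⟩
    exact hK (τ n) t (u0 n) (u n) (hτt n) (hsol n) ((hu0 n).integrable hp1)
      (fun s hs => (hu n s hs).integrable hp1)
      ((int_abs_le_lpNorm p hp1 (wMeasure ρ) _ (hu0 n)).trans (hM n)) x y hx hy)
  obtain ⟨hFL, hconv⟩ := bdd_conv p hp1 hp (wMeasure ρ) (fun n => v (φ n)) F a (fun n => (hvL (φ n)).1)
    (fun n => hvb (φ n)) hF
  refine ⟨φ, hFL.toLp F, hφ, ?_⟩
  rw [Lp.tendsto_Lp_iff_tendsto_eLpNorm]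
  have hexp : Tendsto (fun n => ENNReal.ofReal (Real.exp (-(t - τ (φ n))) * M)) atTop (𝓝 0) := by
    have h1 : Tendsto (fun n => -(t - τ (φ n))) atTop atBot := by
      have := tendsto_atBot_add_const_right atTop (-t) (hτ.comp hφ.tendsto_atTop)
      refine this.congr fun n => ?_
      simp; ring
    have h2 := (Real.tendsto_exp_atBot.comp h1).mul_const M
    rw [zero_mul] at h2
    simpa using ENNReal.tendsto_ofReal h2
  have hsum := hconv.add hexp
  rw [add_zero] at hsum
  refine tendsto_of_tendsto_of_tendsto_of_le_of_le tendsto_const_nhds hsum (fun n => zero_le)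
    fun n => ?_
  have e : (⇑(w (φ n)) - F) =ᵐ[wMeasure ρ] (v (φ n) - F) + Real.exp (-(t - τ (φ n))) • u0 (φ n) := by
    filter_upwards [hw (φ n)] with x hx
    simp only [Pi.sub_apply, Pi.add_apply, Pi.smul_apply, smul_eq_mul, hx, v]
    ring
  rw [eLpNorm_congr_ae e]
  refine (eLpNorm_add_le ((hvL _).1.sub hFL.1) ((hu0 _).1.const_smul _) hp1).trans ?_
  gcongr
  rw [eLpNorm_const_smul, ENNReal.ofReal_mul (Real.exp_pos _).le]
  gcongr
  · rw [Real.enorm_of_nonneg (Real.exp_pos _).le]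
  · rw [← ofReal_lpNorm (hu0 (φ n))]
    exact ENNReal.ofReal_le_ofReal (hM _)

end aux2

section ode

lemma scalar_sol (g h : ℝ → ℝ) (β a ℓg : ℝ) (hgc : Continuous g) (hhc : Continuous h)
    (hgLip : ∀ s₁ s₂, |g s₁ - g s₂| ≤ ℓg * |s₁ - s₂|) (hga : ∀ s, |g s| ≤ a) (τ : ℝ) :
    ∃ v : ℝ → ℝ, ∀ t ≥ τ, v t = ∫ s in τ..t, Real.exp (-(t - s)) * g (β * v s + β * h s) := by
  have ha : 0 ≤ a := (abs_nonneg _).trans (hga 0)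
  let f : ℝ → ℝ → ℝ := fun t z => Real.exp t * g (β * (Real.exp (-t) * z) + β * h t)
  have hfc : Continuous (Function.uncurry f) := by
    simp only [f, Function.uncurry_def]
    fun_prop
  have hlip : ∀ t, LipschitzWith (|ℓg| * |β|).toNNReal (f t) := by
    intro t
    refine LipschitzWith.of_dist_le_mul fun x y => ?_
    rw [Real.coe_toNNReal _ (by positivity), Real.dist_eq, Real.dist_eq, ← mul_sub, abs_mul,
      abs_of_pos (Real.exp_pos t)]
    calc Real.exp t * |g (β * (Real.exp (-t) * x) + β * h t) -
          g (β * (Real.exp (-t) * y) + β * h t)|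
        ≤ Real.exp t * (|ℓg| * |β * (Real.exp (-t) * x) + β * h t -
          (β * (Real.exp (-t) * y) + β * h t)|) := by
          gcongr
          refine (hgLip _ _).trans ?_
          gcongr
          exact le_abs_self _
      _ = Real.exp t * (|ℓg| * (|β| * (Real.exp (-t) * |x - y|))) := by
          have e : β * (Real.exp (-t) * x) + β * h t - (β * (Real.exp (-t) * y) + β * h t) =
            β * (Real.exp (-t) * (x - y)) := by ring
          rw [e, abs_mul, abs_mul, abs_of_pos (Real.exp_pos (-t))]
      _ = (Real.exp t * Real.exp (-t)) * (|ℓg| * |β| * |x - y|) := by ring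
      _ = |ℓg| * |β| * |x - y| := by rw [← Real.exp_add]; simp
  have hex : ∀ n : ℕ, ∃ z : ℝ → ℝ, z τ = 0 ∧ ∀ t ∈ Icc τ (τ + n),
      HasDerivWithinAt z (f t (z t)) (Icc τ (τ + n)) t := by
    intro n
    have hn : τ ≤ τ + n := by simp
    let L : ℝ≥0 := (Real.exp (τ + n) * a).toNNReal
    have hPL : IsPicardLindelof f (tmin := τ) (tmax := τ + n) ⟨τ, left_mem_Icc.2 hn⟩ 0
        (L * n) 0 L (|ℓg| * |β|).toNNReal := by
      refine ⟨fun t _ => (hlip t).lipschitzOnWith, fun x _ => ?_, fun t ht x _ => ?_, ?_⟩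
      · exact (hfc.comp (by fun_prop : Continuous fun t : ℝ => (t, x))).continuousOn
      · rw [Real.coe_toNNReal _ (by positivity), Real.norm_eq_abs, abs_mul,
          abs_of_pos (Real.exp_pos t)]
        exact mul_le_mul (Real.exp_le_exp.2 ht.2) (hga _) (abs_nonneg _) (Real.exp_pos _).le
      · simp
    exact hPL.exists_eq_forall_mem_Icc_hasDerivWithinAt₀
  choose z hz0 hz using hex
  have hzc : ∀ n, ContinuousOn (z n) (Icc τ (τ + n)) := fun n t ht =>
    (hz n t ht).continuousWithinAt
  have hmono : ∀ n m : ℕ, n ≤ m → Icc τ (τ + n) ⊆ Icc τ (τ + m) := by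
    intro n m hnm
    apply Icc_subset_Icc_right
    have : (n : ℝ) ≤ m := by exact_mod_cast hnm
    linarith
  have huniq : ∀ n m : ℕ, n ≤ m → EqOn (z n) (z m) (Icc τ (τ + n)) := by
    intro n m hnm
    refine ODE_solution_unique_of_mem_Icc_right (v := f) (s := fun _ => univ)
      (fun t _ => (hlip t).lipschitzOnWith) (hzc n) ?_ (fun _ _ => mem_univ _)
      ((hzc m).mono (hmono n m hnm)) ?_ (fun _ _ => mem_univ _) (by rw [hz0, hz0])
    · intro t ht
      exact (hz n t (Ico_subset_Icc_self ht)).mono_of_mem_nhdsWithin (Icc_mem_nhdsGE_of_mem ht)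
    · intro t ht
      exact ((hz m t (hmono n m hnm (Ico_subset_Icc_self ht))).mono
        (hmono n m hnm)).mono_of_mem_nhdsWithin (Icc_mem_nhdsGE_of_mem ht)
  let Z : ℝ → ℝ := fun t => z ⌈t - τ⌉₊ t
  have hZ : ∀ (n : ℕ), ∀ t ∈ Icc τ (τ + n), Z t = z n t := by
    intro n t ht
    have h1 : ⌈t - τ⌉₊ ≤ n := Nat.ceil_le.2 (by linarith [ht.2])
    refine huniq _ n h1 ⟨ht.1, ?_⟩
    have := Nat.le_ceil (t - τ)
    linarith
  refine ⟨fun t => Real.exp (-t) * Z t, fun t ht => ?_⟩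
  have ht' : τ ≤ t := ht
  rw [exp_factor]
  beta_reduce
  congr 1
  obtain ⟨n, hn⟩ : ∃ n : ℕ, t ≤ τ + n := ⟨⌈t - τ⌉₊, by linarith [Nat.le_ceil (t - τ)]⟩
  have hsub : Icc τ t ⊆ Icc τ (τ + n) := Icc_subset_Icc_right hn
  have hcont : ContinuousOn (fun s => f s (z n s)) (Icc τ t) :=
    hfc.comp_continuousOn (continuousOn_id.prodMk ((hzc n).mono hsub))
  have hIntg := intervalIntegral.integral_eq_sub_of_hasDerivAt_of_le ht' ((hzc n).mono hsub)
    (f' := fun s => f s (z n s)) (fun s hs => (hz n s (hsub (Ioo_subset_Icc_self hs))).hasDerivAt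
      (Icc_mem_nhds hs.1 (hs.2.trans_le hn))) (hcont.intervalIntegrable_of_Icc ht')
  rw [hz0, sub_zero] at hIntg
  rw [hZ n t ⟨ht', hn⟩, ← hIntg]
  refine intervalIntegral.integral_congr fun s hs => ?_
  rw [uIcc_of_le ht'] at hs
  simp only [f]
  rw [hZ n s (hsub hs)]

end ode
theorem stmt11 {N : ℕ} (p : ℝ≥0∞) [Fact (1 ≤ p)] (hp : p ≠ ⊤)
    (ρ : Euc N → ℝ) (hρc : Continuous ρ) (hρpos : ∀ x, 0 < ρ x) (hρ1 : ∫ x, ρ x = 1)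
    (β : ℝ) (hβ : 0 < β)
    (J : Euc N → ℝ) (hJC1 : ContDiff ℝ 1 J) (hJnn : ∀ x, 0 ≤ J x)
    (hJeven : ∀ x, J (-x) = J x)
    (hJsupp : ∀ x : Euc N, 1 < ‖x‖ → J x = 0) (hJ1 : ∫ x, J x = 1)
    (g : ℝ → ℝ) (hgC1 : ContDiff ℝ 1 g)
    (ℓg : ℝ) (hgLip : ∀ s₁ s₂, |g s₁ - g s₂| ≤ ℓg * |s₁ - s₂|) (hg0 : g 0 = 0)
    (a : ℝ) (hga : ∀ s, |g s| ≤ a)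
    (k₁ : ℝ) (hg'Lip : ∀ s₁ s₂, |deriv g s₁ - deriv g s₂| ≤ k₁ * |s₁ - s₂|)
    (hstar : ℝ) (h : ℝ → ℝ) (hhc : Continuous h) (hh : ∀ t, h t ∈ Ico (0 : ℝ) hstar)
    (ε : ℝ) (hε : 0 < ε) (t : ℝ) :
    (attrSet p ρ J g h β (a + ε) t).Nonempty ∧
    IsCompact (attrSet p ρ J g h β (a + ε) t) ∧
    (∀ w ∈ attrSet p ρ J g h β (a + ε) t, ‖w‖ ≤ a) ∧
    (∀ D : Set (Lp ℝ p (wMeasure ρ)), Bornology.IsBounded D →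
      ∀ δ > 0, ∃ T : ℝ, ∀ τ ≤ T, ∀ d ∈ D, ∀ u : ℝ → Euc N → ℝ,
        (∀ t' ≥ τ, MemWLp p.toReal ρ (u t')) →
        IsSolution J g (fun s _ => h s) β τ (⇑d) u →
        ∀ w : Lp ℝ p (wMeasure ρ), ⇑w =ᵐ[wMeasure ρ] u t →
          Metric.infDist w (attrSet p ρ J g h β (a + ε) t) < δ) := by
  have hp1 : 1 ≤ p := Fact.out
  have hprob := wM_prob ρ hρc hρpos hρ1
  have ha : 0 ≤ a := (abs_nonneg _).trans (hga 0)
  have hgc : Continuous g := hgC1.continuous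
  have hmem := memWLp_iff p hp1 hp ρ hρc hρpos
  have hlp : ∀ w : Lp ℝ p (wMeasure ρ), ‖w‖ = lpNorm w p (wMeasure ρ) := fun w => by
    rw [Lp.norm_def, toReal_eLpNorm (Lp.aestronglyMeasurable w)]
  have hexp0 : ∀ (τ : ℕ → ℝ), Tendsto τ atTop atBot → ∀ s M : ℝ,
      Tendsto (fun n => Real.exp (-(s - τ n)) * M + a) atTop (𝓝 a) := by
    intro τ hτ s M
    have h1 : Tendsto (fun n => -(s - τ n)) atTop atBot := by
      refine (tendsto_atBot_add_const_right atTop (-s) hτ).congr fun n => ?_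
      ring
    have h2 := ((Real.tendsto_exp_atBot.comp h1).mul_const M).add_const a
    simpa using h2
  have hbot : ∀ τ : ℕ → ℝ, (∀ n : ℕ, τ n ≤ t - n) → Tendsto τ atTop atBot := by
    intro τ hτ
    refine tendsto_atBot_mono hτ ?_
    have : Tendsto (fun n : ℕ => (n : ℝ)) atTop atTop := tendsto_natCast_atTop_atTop
    exact tendsto_atBot_add_const_left _ t (tendsto_neg_atTop_atBot.comp this)
  have hle : ∀ τ : ℕ → ℝ, (∀ n : ℕ, τ n ≤ t - n) → ∀ n, τ n ≤ t := by
    intro τ hτ n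
    have := hτ n
    have : (0 : ℝ) ≤ n := Nat.cast_nonneg n
    linarith
  have hseq : ∀ (τ : ℕ → ℝ) (w : ℕ → Lp ℝ p (wMeasure ρ)), (∀ n : ℕ, τ n ≤ t - n) →
      (∀ n, w n ∈ procSet p ρ J g h β (a + ε) t (τ n)) →
      ∃ (φ : ℕ → ℕ) (W : Lp ℝ p (wMeasure ρ)), StrictMono φ ∧
        Tendsto (fun n => w (φ n)) atTop (𝓝 W) := by
    intro τ w hτ hw
    choose u u0 h1 h2 h3 h4 h5 using hw
    refine asym_compact p hp ρ hρc hρpos hρ1 β J hJC1 hJsupp g hgc ℓg hgLip a hga h hhc (a + ε) t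
      τ (hbot τ hτ) (hle τ hτ) u0 u h4 (fun n => (hmem _).1 (h1 n)) (fun n => ?_)
      (fun n s hs => (hmem _).1 (h3 n s hs)) w h5
    rw [← wnorm_eq p hp1 hp ρ hρc hρpos _ ((hmem _).1 (h1 n))]
    exact h2 n
  have hne : ∀ τ : ℝ, (procSet p ρ J g h β (a + ε) t τ).Nonempty := by
    intro τ
    obtain ⟨v, hv⟩ := scalar_sol g h β a ℓg hgc hhc hgLip hga τ
    have hcL : ∀ c : ℝ, MemLp (fun _ : Euc N => c) p (wMeasure ρ) := fun c => memLp_const c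
    refine ⟨(hcL (v t)).toLp _, fun s _ => v s, fun _ => 0, (hmem _).2 (hcL 0), ?_,
      fun s _ => (hmem _).2 (hcL _), ?_, (hcL (v t)).coeFn_toLp⟩
    · rw [wnorm_eq p hp1 hp ρ hρc hρpos _ (hcL 0)]
      have : lpNorm (fun _ : Euc N => (0 : ℝ)) p (wMeasure ρ) = 0 := lpNorm_zero p (wMeasure ρ)
      rw [this]
      positivity
    · intro s hs x
      have hcv : ∀ c, conv J (fun _ => c) x = c := by
        intro c
        unfold conv
        rw [integral_mul_const, integral_sub_left_eq_self J volume x, hJ1, one_mul]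
      simp only [hcv, mul_zero, zero_add]
      exact hv s hs
  have hclosed : IsClosed (attrSet p ρ J g h β (a + ε) t) :=
    isClosed_biInter fun _ _ => isClosed_closure
  have happ : ∀ w ∈ attrSet p ρ J g h β (a + ε) t, ∀ n : ℕ,
      w ∈ closure (⋃ τ ∈ Iic (t - n), procSet p ρ J g h β (a + ε) t τ) := by
    intro w hw n
    have := mem_iInter₂.1 hw (t - n) (by simp)
    exact this
  have hN : (attrSet p ρ J g h β (a + ε) t).Nonempty := by
    choose w hw using fun n : ℕ => hne (t - n)
    obtain ⟨φ, W, hφ, hW⟩ := hseq (fun n => t - n) w (fun n => le_rfl) hw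
    refine ⟨W, mem_iInter₂.2 fun s _ => ?_⟩
    refine mem_closure_of_tendsto hW ?_
    have hb := (hbot (fun n => t - n) fun n => le_rfl).comp hφ.tendsto_atTop
    filter_upwards [hb.eventually (eventually_le_atBot s)] with n hn
    exact mem_iUnion₂.2 ⟨_, hn, hw (φ n)⟩
  refine ⟨hN, ?_, ?_, ?_⟩
  · apply IsSeqCompact.isCompact
    intro w hw
    have h1 : ∀ n : ℕ, ∃ (v : Lp ℝ p (wMeasure ρ)) (τ : ℝ), τ ≤ t - n ∧
        v ∈ procSet p ρ J g h β (a + ε) t τ ∧ dist (w n) v < 1 / ((n : ℝ) + 1) := by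
      intro n
      obtain ⟨v, hv, hd⟩ := Metric.mem_closure_iff.1 (happ (w n) (hw n) n) (1 / ((n : ℝ) + 1))
        (by positivity)
      obtain ⟨τ, hτ, hv⟩ := mem_iUnion₂.1 hv
      exact ⟨v, τ, hτ, hv, hd⟩
    choose v τ hτ hv hd using h1
    obtain ⟨φ, W, hφ, hW⟩ := hseq τ v hτ hv
    have hw' : Tendsto (fun n => w (φ n)) atTop (𝓝 W) := by
      refine tendsto_of_tendsto_of_dist hW ?_
      have hz : Tendsto (fun n : ℕ => 1 / ((φ n : ℝ) + 1)) atTop (𝓝 0) :=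
        (tendsto_one_div_add_atTop_nhds_zero_nat (𝕜 := ℝ)).comp hφ.tendsto_atTop
      refine squeeze_zero (fun n => dist_nonneg) (fun n => ?_) hz
      rw [dist_comm]
      exact (hd (φ n)).le
    exact ⟨W, hclosed.mem_of_tendsto hw' (Eventually.of_forall fun n => hw (φ n)), φ, hφ, hw'⟩
  · intro w hw
    have h1 : ∀ n : ℕ, ‖w‖ ≤ Real.exp (-(t - (t - n))) * (a + ε) + a := by
      intro n
      have hsub : closure (⋃ τ ∈ Iic (t - (n : ℝ)), procSet p ρ J g h β (a + ε) t τ) ⊆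
          Metric.closedBall 0 (Real.exp (-(t - (t - n))) * (a + ε) + a) := by
        refine closure_minimal ?_ Metric.isClosed_closedBall
        intro v hv
        obtain ⟨τ, hτ, u, u0, h1, h2, h3, h4, h5⟩ := mem_iUnion₂.1 hv
        have hτ' : τ ≤ t - n := hτ
        have hτt : τ ≤ t := by
          have : (0 : ℝ) ≤ n := Nat.cast_nonneg n
          linarith
        rw [mem_closedBall_zero_iff]
        have hsn := sol_norm p hp1 (wMeasure ρ) (u t) u0 a (Real.exp (-(t - τ)))
          (Real.exp_pos _).le ha ((hmem _).1 (h3 t hτt)) ((hmem _).1 h1)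
          (fun x => sol_bound β J g a h τ u0 u hga h4 t hτt x)
        rw [← wnorm_eq p hp1 hp ρ hρc hρpos _ ((hmem _).1 h1)] at hsn
        have hvn : ‖v‖ = lpNorm (u t) p (wMeasure ρ) := by
          rw [hlp v, ← toReal_eLpNorm (Lp.aestronglyMeasurable v), eLpNorm_congr_ae h5,
            toReal_eLpNorm ((hmem _).1 (h3 t hτt)).1]
        rw [hvn]
        refine hsn.trans ?_
        gcongr
        rw [wnorm_eq p hp1 hp ρ hρc hρpos _ ((hmem _).1 h1)]
        exact lpNorm_nonneg
      exact mem_closedBall_zero_iff.1 (hsub (happ w hw n))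
    exact ge_of_tendsto (hexp0 (fun n => t - n) (hbot _ fun n => le_rfl) t (a + ε))
      (Eventually.of_forall h1)
  · intro D hD δ hδ
    by_contra hcon
    push Not at hcon
    obtain ⟨M, hM⟩ := hD.exists_norm_le
    choose τ hτ d hdD u hu hsol w hw hdist using fun n : ℕ => hcon (t - n)
    have hu' : ∀ n, ∀ s ≥ τ n, MemLp (u n s) p (wMeasure ρ) := fun n s hs => (hmem _).1 (hu n s hs)
    have hdL : ∀ n, MemLp (d n) p (wMeasure ρ) := fun n => Lp.memLp (d n)
    have hdM : ∀ n, lpNorm (d n) p (wMeasure ρ) ≤ M := fun n => by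
      rw [← hlp]; exact hM _ (hdD n)
    obtain ⟨φ, W, hφ, hW⟩ := asym_compact p hp ρ hρc hρpos hρ1 β J hJC1 hJsupp g hgc ℓg hgLip a hga
      h hhc M t τ (hbot τ hτ) (hle τ hτ) (fun n => d n) u hsol hdL hdM hu' w hw
    have hWA : W ∈ attrSet p ρ J g h β (a + ε) t := by
      refine mem_iInter₂.2 fun s _ => mem_closure_of_tendsto hW ?_
      have hb := (hbot τ hτ).comp hφ.tendsto_atTop
      have he := (hexp0 _ hb s M).eventually (gt_mem_nhds (by linarith : a < a + ε))
      filter_upwards [hb.eventually (eventually_le_atBot s), he] with n hn hn2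
      have hn' : τ (φ n) ≤ s := hn
      refine mem_iUnion₂.2 ⟨s, mem_Iic.2 le_rfl, u (φ n), u (φ n) s, hu _ s hn', ?_,
        fun s' hs' => hu _ s' (hn'.trans hs'), ?_, hw (φ n)⟩
      · rw [wnorm_eq p hp1 hp ρ hρc hρpos _ (hu' _ s hn')]
        refine (sol_norm p hp1 (wMeasure ρ) (u (φ n) s) (d (φ n)) a (Real.exp (-(s - τ (φ n))))
          (Real.exp_pos _).le ha (hu' _ s hn') (hdL _)
          (fun x => sol_bound β J g a h _ _ _ hga (hsol (φ n)) s hn' x)).trans ?_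
        refine le_trans ?_ hn2.le
        simp only [Function.comp_apply]
        gcongr
        exact hdM _
      · exact sol_restart ρ hρc hρpos hρ1 β J hJC1 hJsupp g hgc a hga h hhc (τ (φ n)) (d (φ n))
          (u (φ n)) (hsol _) ((hdL _).integrable hp1) (fun r hr => (hu' _ r hr).integrable hp1) s hn'
    have hcont : Tendsto (fun n => Metric.infDist (w (φ n)) (attrSet p ρ J g h β (a + ε) t)) atTop
        (𝓝 (Metric.infDist W (attrSet p ρ J g h β (a + ε) t))) :=
      ((Metric.continuous_infDist_pt _).tendsto W).comp hW
    rw [Metric.infDist_zero_of_mem hWA] at hcont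
    have := ge_of_tendsto hcont (Eventually.of_forall fun n => hdist (φ n))
    linarith
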